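/- Idempotents commute in 𝒫_λ(θ,S) if and only if idempotents commute in the monoid S. -/

import Mathlib

open scoped Classical

inductive PBR (Λ S : Type*) : Type _ where
  | zero : PBR Λ S
  | elt : S → List Λ → List Λ → PBR Λ S

namespace PBR

/-- Multiplication on the λ-polycyclic Bruck–Reilly extension `𝒫_λ(θ,S)`. -/
noncomputable def mul {Λ S : Type*} [Monoid S] (θ : S →* S) :
    PBR Λ S → PBR Λ S → PBR Λ S
  | zero, _ => zero
  | elt _ _ _, zero => zero
  | elt s a₁ a₂, elt t b₁ b₂ =>
    if h : ∃ u : List Λ, b₁ = u ++ a₂ then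
      elt ((⇑θ)^[h.choose.length] s * t) (h.choose ++ a₁) b₂
    else if h' : ∃ v : List Λ, a₂ = v ++ b₁ then
      elt (s * (⇑θ)^[h'.choose.length] t) a₁ (h'.choose ++ b₂)
    else zero

end PBR

/-!
The nonzero idempotents are the elements `(e, a⁻¹a)` with `e` idempotent in `S`. Two of them,
`(e, a⁻¹a)` and `(f, b⁻¹b)`, have both products zero unless one word is a suffix of the other; if
`b = ua`, the `S`-components of the two products are `θ^|u|(e) f` and `f θ^|u|(e)`, where
`θ^|u|(e)` is again idempotent because `θ` is multiplicative.
-/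

theorem isIdempotentElem_iterate_map {M F : Type*} [Mul M] [FunLike F M M] [MulHomClass F M M]
    (φ : F) {e : M} (he : IsIdempotentElem e) (n : ℕ) : IsIdempotentElem (φ^[n] e) := by
  rw [IsIdempotentElem, ← iterate_map_mul, he.eq]

namespace PBR

variable {Λ S : Type*} [Monoid S] (θ : S →* S)

protected theorem zero_mul (x : PBR Λ S) : mul θ zero x = zero := rfl

protected theorem mul_zero (x : PBR Λ S) : mul θ x zero = zero := by
  cases x <;> rfl

theorem elt_mul_elt_append (s t : S) (a₁ a₂ b₂ u : List Λ) :
    mul θ (elt s a₁ a₂) (elt t (u ++ a₂) b₂) = elt (θ^[u.length] s * t) (u ++ a₁) b₂ := by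
  have h : ∃ w : List Λ, u ++ a₂ = w ++ a₂ := ⟨u, rfl⟩
  have h_choose : h.choose = u := (List.append_cancel_right h.choose_spec).symm
  rw [mul, dif_pos h, h_choose]

theorem elt_append_mul_elt (s t : S) (a₁ b₁ b₂ v : List Λ) :
    mul θ (elt s a₁ (v ++ b₁)) (elt t b₁ b₂) = elt (s * θ^[v.length] t) a₁ (v ++ b₂) := by
  rcases eq_or_ne v [] with rfl | hv
  · exact elt_mul_elt_append θ s t a₁ b₁ b₂ []
  · have h_not : ¬ ∃ u : List Λ, b₁ = u ++ (v ++ b₁) := by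
      rintro ⟨u, hu⟩
      rw [← List.append_assoc, List.self_eq_append_left] at hu
      exact hv (List.append_eq_nil_iff.mp hu).2
    have h : ∃ w : List Λ, v ++ b₁ = w ++ b₁ := ⟨v, rfl⟩
    have h_choose : h.choose = v := (List.append_cancel_right h.choose_spec).symm
    rw [mul, dif_neg h_not, dif_pos h, h_choose]

theorem elt_mul_elt_of_not_suffix (s t : S) {a₁ a₂ b₁ b₂ : List Λ}
    (hab : ¬ a₂ <:+ b₁) (hba : ¬ b₁ <:+ a₂) : mul θ (elt s a₁ a₂) (elt t b₁ b₂) = zero := by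
  rw [mul, dif_neg fun ⟨u, hu⟩ => hab ⟨u, hu.symm⟩, dif_neg fun ⟨v, hv⟩ => hba ⟨v, hv.symm⟩]

theorem elt_mul_elt_same (s t : S) (a₁ a₂ b₂ : List Λ) :
    mul θ (elt s a₁ a₂) (elt t a₂ b₂) = elt (s * t) a₁ b₂ :=
  elt_mul_elt_append θ s t a₁ a₂ b₂ []

theorem eq_of_elt_mul_self {s : S} {a b : List Λ}
    (h : mul θ (elt s a b) (elt s a b) = elt s a b) : a = b := by
  by_cases hba : b <:+ a
  · obtain ⟨u, rfl⟩ := hba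
    rw [elt_mul_elt_append] at h
    have hu : u ++ (u ++ b) = u ++ b := (elt.inj h).2.1
    rw [List.append_left_eq_self.mp hu, List.nil_append]
  by_cases hab : a <:+ b
  · obtain ⟨v, rfl⟩ := hab
    rw [elt_append_mul_elt] at h
    have hv : v ++ (v ++ a) = v ++ a := (elt.inj h).2.2
    rw [List.append_left_eq_self.mp hv, List.nil_append]
  · rw [elt_mul_elt_of_not_suffix θ s s hba hab] at h
    cases h

theorem elt_mul_self_iff {s : S} {a b : List Λ} :
    mul θ (elt s a b) (elt s a b) = elt s a b ↔ a = b ∧ IsIdempotentElem s := by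
  constructor
  · intro h
    obtain rfl := eq_of_elt_mul_self θ h
    rw [elt_mul_elt_same] at h
    exact ⟨rfl, (elt.inj h).1⟩
  · rintro ⟨rfl, hs⟩
    rw [elt_mul_elt_same, hs.eq]

theorem elt_mul_elt_append_comm_iff {s t : S} {a u : List Λ} :
    mul θ (elt s a a) (elt t (u ++ a) (u ++ a)) = mul θ (elt t (u ++ a) (u ++ a)) (elt s a a) ↔
      Commute (θ^[u.length] s) t := by
  rw [elt_mul_elt_append, elt_append_mul_elt, elt.injEq]
  exact and_iff_left ⟨rfl, rfl⟩

theorem elt_mul_elt_comm_of_forall_commute {s t : S} (hst : ∀ n, Commute (θ^[n] s) t)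
    (hts : ∀ n, Commute (θ^[n] t) s) (a b : List Λ) :
    mul θ (elt s a a) (elt t b b) = mul θ (elt t b b) (elt s a a) := by
  by_cases hab : a <:+ b
  · obtain ⟨u, rfl⟩ := hab
    exact (elt_mul_elt_append_comm_iff θ).mpr (hst u.length)
  by_cases hba : b <:+ a
  · obtain ⟨v, rfl⟩ := hba
    exact ((elt_mul_elt_append_comm_iff θ).mpr (hts v.length)).symm
  · rw [elt_mul_elt_of_not_suffix θ s t hab hba, elt_mul_elt_of_not_suffix θ t s hba hab]

end PBR

theorem pbr_idempotents_commute_iff_general {Λ S : Type*} [Monoid S] (θ : S →* S) :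
    (∀ e f : PBR Λ S, PBR.mul θ e e = e → PBR.mul θ f f = f →
        PBR.mul θ e f = PBR.mul θ f e) ↔
      (∀ e f : S, e * e = e → f * f = f → e * f = f * e) := by
  constructor
  · intro h e f he hf
    have h_comm := h (.elt e [] []) (.elt f [] []) ((PBR.elt_mul_self_iff θ).mpr ⟨rfl, he⟩)
      ((PBR.elt_mul_self_iff θ).mpr ⟨rfl, hf⟩)
    exact (PBR.elt_mul_elt_append_comm_iff (u := []) θ).mp h_comm
  · rintro hS (_ | ⟨s, a, a'⟩) (_ | ⟨t, b, b'⟩) he hf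
    · rfl
    · rw [PBR.mul_zero, PBR.zero_mul]
    · rw [PBR.mul_zero, PBR.zero_mul]
    · obtain ⟨rfl, hs⟩ := (PBR.elt_mul_self_iff θ).mp he
      obtain ⟨rfl, ht⟩ := (PBR.elt_mul_self_iff θ).mp hf
      exact PBR.elt_mul_elt_comm_of_forall_commute θ
        (fun n => hS _ _ (isIdempotentElem_iterate_map θ hs n) ht)
        (fun n => hS _ _ (isIdempotentElem_iterate_map θ ht n) hs) a b

/-- idempotents commute in `𝒫_λ(θ,S)` iff idempotents commute in `S`. -/
theorem pbr_idempotents_commute_iff {Λ S : Type*} [Monoid S] (θ : S →* S)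
    (hθ : ∀ s : S, IsUnit (θ s)) :
    (∀ e f : PBR Λ S, PBR.mul θ e e = e → PBR.mul θ f f = f →
        PBR.mul θ e f = PBR.mul θ f e) ↔
      (∀ e f : S, e * e = e → f * f = f → e * f = f * e) :=
  pbr_idempotents_commute_iff_general θ
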